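/- Let 𝕃 be a countable Boolean subalgebra of the measure algebra ℳ and let a ∈ ℳ ∖ 𝕃. Then every measure-preserving embedding φ of 𝕃 into P(ℕ)/fin can be extended to a measure-preserving embedding ψ of the subalgebra of ℳ generated by 𝕃 ∪ {a} into P(ℕ)/fin. -/

import Mathlib

open Set MeasureTheory
open scoped ENNReal

namespace Paper

/-- `X` and `Y` agree modulo a finite set. -/
def AlmostEq {α : Type} (X Y : Set α) : Prop := (symmDiff X Y).Finite

/-- the "equal mod finite" setoid on `Set α` -/
def finSetoid (α : Type) : Setoid (Set α) where
  r X Y := (symmDiff X Y).Finite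
  iseqv := by
    constructor
    · intro X; simp
    · intro X Y h; rwa [symmDiff_comm]
    · intro X Y Z h1 h2
      exact (h1.union h2).subset (symmDiff_triangle X Y Z)

/-- the quotient Boolean algebra `P(α)/fin` -/
def PFin (α : Type) : Type := Quotient (finSetoid α)

/-- the class of `X` in `P(α)/fin` -/
def PFin.mk {α : Type} (X : Set α) : PFin α := Quotient.mk (finSetoid α) X

/-- join in `P(α)/fin` -/
def PFin.sup {α : Type} : PFin α → PFin α → PFin α :=
  Quotient.lift₂ (fun X Y => PFin.mk (X ∪ Y))
    (by
      intro X Y X' Y' hX hY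
      refine Quotient.sound ?_
      have hX' : (symmDiff X X').Finite := hX
      have hY' : (symmDiff Y Y').Finite := hY
      show (symmDiff (X ∪ Y) (X' ∪ Y')).Finite
      refine (hX'.union hY').subset ?_
      intro x hx
      simp only [Set.mem_symmDiff, Set.mem_union] at hx ⊢
      tauto)

/-- meet in `P(α)/fin` -/
def PFin.inf {α : Type} : PFin α → PFin α → PFin α :=
  Quotient.lift₂ (fun X Y => PFin.mk (X ∩ Y))
    (by
      intro X Y X' Y' hX hY
      refine Quotient.sound ?_
      have hX' : (symmDiff X X').Finite := hX
      have hY' : (symmDiff Y Y').Finite := hY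
      show (symmDiff (X ∩ Y) (X' ∩ Y')).Finite
      refine (hX'.union hY').subset ?_
      intro x hx
      simp only [Set.mem_symmDiff, Set.mem_inter_iff, Set.mem_union] at hx ⊢
      tauto)

/-- complement in `P(α)/fin` -/
def PFin.compl {α : Type} : PFin α → PFin α :=
  Quotient.lift (fun X => PFin.mk Xᶜ)
    (by
      intro X Y h
      refine Quotient.sound ?_
      have h' : (symmDiff X Y).Finite := h
      show (symmDiff Xᶜ Yᶜ).Finite
      have e : symmDiff Xᶜ Yᶜ = symmDiff X Y := by
        ext x; simp only [Set.mem_symmDiff, Set.mem_compl_iff]; tauto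
      rw [e]; exact h')

/-- bottom of `P(α)/fin` -/
def PFin.bot {α : Type} : PFin α := PFin.mk (∅ : Set α)

/-- top of `P(α)/fin` -/
def PFin.top {α : Type} : PFin α := PFin.mk (Set.univ : Set α)

/-- Borel subsets of the interval `(0,1]` -/
abbrev ISet : Type := {A : Set ℝ // MeasurableSet A ∧ A ⊆ Set.Ioc (0 : ℝ) 1}

/-- the "equal modulo a Lebesgue-null set" setoid on Borel subsets of `(0,1]` -/
def measSetoidI : Setoid ISet where
  r A B := volume (symmDiff (A : Set ℝ) (B : Set ℝ)) = 0
  iseqv := by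
    constructor
    · intro A; simp
    · intro A B h; rwa [symmDiff_comm]
    · intro A B C h1 h2
      exact measure_mono_null (symmDiff_triangle (A : Set ℝ) (B : Set ℝ) (C : Set ℝ))
        (measure_union_null h1 h2)

/-- the measure algebra `ℳ` of `(0,1]`: Borel sets modulo Lebesgue-null sets -/
def MAlgI : Type := Quotient measSetoidI

/-- the class of a Borel set in the measure algebra -/
def MAlgI.mk (A : ISet) : MAlgI := Quotient.mk measSetoidI A

/-- join in the measure algebra -/
def MAlgI.sup : MAlgI → MAlgI → MAlgI :=
  Quotient.lift₂ (fun A B : ISet =>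
      MAlgI.mk ⟨(A : Set ℝ) ∪ (B : Set ℝ), ⟨A.2.1.union B.2.1, Set.union_subset A.2.2 B.2.2⟩⟩)
    (by
      intro A B A' B' hA hB
      refine Quotient.sound ?_
      have hA' : volume (symmDiff (A : Set ℝ) (A' : Set ℝ)) = 0 := hA
      have hB' : volume (symmDiff (B : Set ℝ) (B' : Set ℝ)) = 0 := hB
      show volume (symmDiff ((A : Set ℝ) ∪ (B : Set ℝ)) ((A' : Set ℝ) ∪ (B' : Set ℝ))) = 0
      refine measure_mono_null ?_ (measure_union_null hA' hB')
      intro x hx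
      simp only [Set.mem_symmDiff, Set.mem_union] at hx ⊢
      tauto)

/-- meet in the measure algebra -/
def MAlgI.inf : MAlgI → MAlgI → MAlgI :=
  Quotient.lift₂ (fun A B : ISet =>
      MAlgI.mk ⟨(A : Set ℝ) ∩ (B : Set ℝ),
        ⟨A.2.1.inter B.2.1, fun x hx => A.2.2 hx.1⟩⟩)
    (by
      intro A B A' B' hA hB
      refine Quotient.sound ?_
      have hA' : volume (symmDiff (A : Set ℝ) (A' : Set ℝ)) = 0 := hA
      have hB' : volume (symmDiff (B : Set ℝ) (B' : Set ℝ)) = 0 := hB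
      show volume (symmDiff ((A : Set ℝ) ∩ (B : Set ℝ)) ((A' : Set ℝ) ∩ (B' : Set ℝ))) = 0
      refine measure_mono_null ?_ (measure_union_null hA' hB')
      intro x hx
      simp only [Set.mem_symmDiff, Set.mem_inter_iff, Set.mem_union] at hx ⊢
      tauto)

/-- complement (relative to `(0,1]`) in the measure algebra -/
def MAlgI.compl : MAlgI → MAlgI :=
  Quotient.lift (fun A : ISet =>
      MAlgI.mk ⟨Set.Ioc (0 : ℝ) 1 \ (A : Set ℝ), ⟨measurableSet_Ioc.diff A.2.1, Set.diff_subset⟩⟩)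
    (by
      intro A B h
      refine Quotient.sound ?_
      have h' : volume (symmDiff (A : Set ℝ) (B : Set ℝ)) = 0 := h
      show volume (symmDiff (Set.Ioc (0 : ℝ) 1 \ (A : Set ℝ)) (Set.Ioc (0 : ℝ) 1 \ (B : Set ℝ))) = 0
      refine measure_mono_null ?_ h'
      intro x hx
      simp only [Set.mem_symmDiff, Set.mem_diff] at hx ⊢
      tauto)

/-- bottom of the measure algebra -/
def MAlgI.bot : MAlgI := MAlgI.mk ⟨∅, ⟨MeasurableSet.empty, Set.empty_subset _⟩⟩

/-- top of the measure algebra -/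
def MAlgI.top : MAlgI := MAlgI.mk ⟨Set.Ioc (0 : ℝ) 1, ⟨measurableSet_Ioc, subset_rfl⟩⟩

/-- `L` is a Boolean subalgebra of the measure algebra -/
structure IsSubalgebra (L : Set MAlgI) : Prop where
  bot_mem : MAlgI.bot ∈ L
  top_mem : MAlgI.top ∈ L
  sup_mem : ∀ a ∈ L, ∀ b ∈ L, MAlgI.sup a b ∈ L
  inf_mem : ∀ a ∈ L, ∀ b ∈ L, MAlgI.inf a b ∈ L
  compl_mem : ∀ a ∈ L, MAlgI.compl a ∈ L

/-- `φ` restricted to `L` is a Boolean-algebra embedding of `L` into `P(ℕ)/fin` -/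
structure IsEmbeddingOn (L : Set MAlgI) (φ : MAlgI → PFin ℕ) : Prop where
  injOn : Set.InjOn φ L
  map_sup : ∀ a ∈ L, ∀ b ∈ L, φ (MAlgI.sup a b) = PFin.sup (φ a) (φ b)
  map_inf : ∀ a ∈ L, ∀ b ∈ L, φ (MAlgI.inf a b) = PFin.inf (φ a) (φ b)
  map_compl : ∀ a ∈ L, φ (MAlgI.compl a) = PFin.compl (φ a)
  map_bot : φ MAlgI.bot = PFin.bot
  map_top : φ MAlgI.top = PFin.top

/-- the Boolean subalgebra of the measure algebra generated by `S` -/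
def genBy (S : Set MAlgI) : Set MAlgI := ⋂₀ {T : Set MAlgI | IsSubalgebra T ∧ S ⊆ T}

/-- the measure of an element of the measure algebra -/
noncomputable def mval : MAlgI → ℝ≥0∞ :=
  Quotient.lift (fun A : ISet => volume (A : Set ℝ))
    (by
      intro A B h
      have h' : volume (symmDiff (A : Set ℝ) (B : Set ℝ)) = 0 := h
      exact measure_congr (measure_symmDiff_eq_zero_iff.mp h'))

/-- `X ⊆ ℕ` has asymptotic density `r` -/
def HasDensity (X : Set ℕ) (r : ℝ) : Prop :=
  Filter.Tendsto (fun n : ℕ => ((X ∩ Set.Icc 1 n).ncard : ℝ) / n) Filter.atTop (nhds r)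

/-- `φ` is measure-preserving on `L`: representatives of `φ b` have asymptotic density
`μ(b)` for every `b ∈ L` -/
def MeasurePreservingOn (L : Set MAlgI) (φ : MAlgI → PFin ℕ) : Prop :=
  ∀ b ∈ L, ∀ X : Set ℕ, PFin.mk X = φ b → HasDensity X (mval b).toReal

open Filter (Tendsto atTop)
open scoped NNReal Topology symmDiff

/-!
To extend an embedding `φ` of `𝕃` over `a`, it suffices to choose an image `x` of `a` such that
`x ⊓ φ b` is `φ b` when `b ≤ a` and `⊥` when `b` is disjoint from `a`; the extension preserves the
measure as soon as every `x ⊓ φ b` has density `μ (b ⊓ a)`. For finitely many `b` one chooses `x`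
separately below the images of the atoms of the subalgebra which they generate, using that a set
of density `c` has subsets of every density in `[0, c]`. For countable `𝕃`, representatives `X n` of
the solutions for the first `n` elements are spliced together: the set which agrees with `X n` on
`(k n, k (n + 1)]` is a solution for all of `𝕃` if `k` grows fast enough.
-/

section BooleanAlgebra

variable {α β : Type*} [BooleanAlgebra α]

/-- The Boolean algebra structure on a surjective image of a Boolean algebra under a map preserving
the operations, for quotients whose operations are given but carry no laws. The order on `β` is
defined by `x ≤ y ↔ x ⊔ y = y`. -/
abbrev booleanAlgebraOfSurjective [Max β] [Min β] [Top β] [Bot β] [Compl β]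
    (f : α → β) (hf : Function.Surjective f) (map_sup : ∀ a b, f (a ⊔ b) = f a ⊔ f b)
    (map_inf : ∀ a b, f (a ⊓ b) = f a ⊓ f b) (map_top : f ⊤ = ⊤) (map_bot : f ⊥ = ⊥)
    (map_compl : ∀ a, f aᶜ = (f a)ᶜ) : BooleanAlgebra β where
  __ := Lattice.mk'
    (hf.forall₂.2 fun a b ↦ by rw [← map_sup, sup_comm, map_sup])
    (hf.forall₃.2 fun a b c ↦ by simp only [← map_sup, sup_assoc])
    (hf.forall₂.2 fun a b ↦ by rw [← map_inf, inf_comm, map_inf])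
    (hf.forall₃.2 fun a b c ↦ by simp only [← map_inf, inf_assoc])
    (hf.forall₂.2 fun a b ↦ by rw [← map_inf, ← map_sup, sup_inf_self])
    (hf.forall₂.2 fun a b ↦ by rw [← map_sup, ← map_inf, inf_sup_self])
  le_sup_inf := hf.forall₃.2 fun a b c ↦ by
    change _ ⊔ _ = _
    simp only [← map_sup, ← map_inf]
    rw [sup_eq_right.2 le_sup_inf]
  inf_compl_le_bot := hf.forall.2 fun a ↦ by
    change _ ⊔ _ = _
    rw [← map_compl, ← map_inf, inf_compl_self, map_bot, ← map_bot, ← map_sup, sup_idem]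
  top_le_sup_compl := hf.forall.2 fun a ↦ by
    change _ ⊔ _ = _
    rw [← map_compl, ← map_sup, sup_compl_eq_top, map_top, ← map_top, ← map_sup, sup_idem]
  le_top := hf.forall.2 fun a ↦ by
    change _ ⊔ _ = _
    rw [← map_top, ← map_sup, sup_top_eq]
  bot_le := hf.forall.2 fun a ↦ by
    change _ ⊔ _ = _
    rw [← map_bot, ← map_sup, bot_sup_eq]

/-- The element which agrees with `b` on `a` and with `c` off `a`. The subalgebra generated by `a`
and a subalgebra `L` consists of the elements `mix a b c` with `b` and `c` in `L`. -/
def mix (a b c : α) : α := b ⊓ a ⊔ c \ a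

lemma mix_self (a b : α) : mix a b b = b := sup_inf_sdiff b a

lemma mix_top_bot (a : α) : mix a ⊤ ⊥ = a := by simp [mix]

lemma mix_inf_self (a b c : α) : mix a b c ⊓ a = b ⊓ a := by
  simp [mix, inf_sup_right]

lemma mix_sdiff_self (a b c : α) : mix a b c \ a = c \ a := by
  simp [mix, sup_sdiff]

lemma inf_eq_inf_iff_disjoint_symmDiff {a b c : α} : b ⊓ a = c ⊓ a ↔ Disjoint (b ∆ c) a := by
  rw [disjoint_iff, inf_symmDiff_distrib_right, symmDiff_eq_bot]

lemma sdiff_eq_sdiff_iff_symmDiff_le {a b c : α} : b \ a = c \ a ↔ b ∆ c ≤ a := by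
  rw [_root_.sdiff_eq, _root_.sdiff_eq, inf_eq_inf_iff_disjoint_symmDiff, disjoint_compl_right_iff]

lemma eq_mix_iff {a b c z : α} : z = mix a b c ↔ Disjoint (z ∆ b) a ∧ z ∆ c ≤ a := by
  rw [← inf_eq_inf_iff_disjoint_symmDiff, ← sdiff_eq_sdiff_iff_symmDiff_le]
  refine ⟨?_, fun ⟨h_inf, h_sdiff⟩ ↦ by rw [mix, ← h_inf, ← h_sdiff, sup_inf_sdiff]⟩
  rintro rfl
  exact ⟨mix_inf_self a b c, mix_sdiff_self a b c⟩

lemma mix_eq_mix_iff {a b c b' c' : α} :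
    mix a b c = mix a b' c' ↔ Disjoint (b ∆ b') a ∧ c ∆ c' ≤ a := by
  rw [eq_mix_iff, ← inf_eq_inf_iff_disjoint_symmDiff, ← sdiff_eq_sdiff_iff_symmDiff_le,
    mix_inf_self, mix_sdiff_self, inf_eq_inf_iff_disjoint_symmDiff, sdiff_eq_sdiff_iff_symmDiff_le]

lemma compl_mix (a b c : α) : (mix a b c)ᶜ = mix a bᶜ cᶜ := by
  rw [eq_mix_iff, compl_symmDiff_compl, compl_symmDiff_compl]
  exact eq_mix_iff.1 rfl

lemma mix_sup_mix (a b c b' c' : α) : mix a b c ⊔ mix a b' c' = mix a (b ⊔ b') (c ⊔ c') := by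
  simp only [mix, inf_sup_right, sup_sdiff, sup_sup_sup_comm]

lemma mix_inf_mix (a b c b' c' : α) : mix a b c ⊓ mix a b' c' = mix a (b ⊓ b') (c ⊓ c') :=
  compl_injective <| by simp only [compl_inf, compl_mix, mix_sup_mix]

end BooleanAlgebra

section Extension

variable {α β : Type*} [BooleanAlgebra α] [BooleanAlgebra β] {L : BooleanSubalgebra α} {a : α}

lemma mem_closure_insert_iff {z : α} :
    z ∈ BooleanSubalgebra.closure (insert a (L : Set α)) ↔ ∃ b c : L, z = mix a b c := by
  refine ⟨fun h ↦ ?_, ?_⟩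
  · refine BooleanSubalgebra.closure_bot_sup_induction ?_ ⟨⊥, ⊥, (mix_self a ⊥).symm⟩ ?_ ?_ h
    · rintro z (rfl | hz)
      · exact ⟨⊤, ⊥, (mix_top_bot z).symm⟩
      · exact ⟨⟨z, hz⟩, ⟨z, hz⟩, (mix_self a z).symm⟩
    · rintro _ - _ - ⟨b, c, rfl⟩ ⟨b', c', rfl⟩
      exact ⟨b ⊔ b', c ⊔ c', mix_sup_mix ..⟩
    · rintro _ - ⟨b, c, rfl⟩
      exact ⟨bᶜ, cᶜ, compl_mix ..⟩
  · rintro ⟨b, c, rfl⟩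
    have ha : a ∈ BooleanSubalgebra.closure (insert a (L : Set α)) :=
      BooleanSubalgebra.subset_closure (mem_insert ..)
    have hL (b : L) : (b : α) ∈ BooleanSubalgebra.closure (insert a (L : Set α)) :=
      BooleanSubalgebra.subset_closure (mem_insert_of_mem _ b.2)
    exact BooleanSubalgebra.sup_mem (BooleanSubalgebra.inf_mem (hL b) ha)
      (BooleanSubalgebra.sdiff_mem (hL c) ha)

lemma exists_boundedLatticeHom_closure_insert (f : BoundedLatticeHom L β) {x : β}
    (h_disj : ∀ b : L, Disjoint (b : α) a → Disjoint (f b) x)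
    (h_le : ∀ b : L, (b : α) ≤ a → f b ≤ x) :
    ∃ g : BoundedLatticeHom (BooleanSubalgebra.closure (insert a (L : Set α))) β,
      ∀ (z : BooleanSubalgebra.closure (insert a (L : Set α))) (b c : L),
        (z : α) = mix a b c → g z = mix x (f b) (f c) := by
  have h_wd (b c b' c' : L) (h : mix a (b : α) c = mix a b' c') :
      mix x (f b) (f c) = mix x (f b') (f c') := by
    rw [mix_eq_mix_iff] at h ⊢
    simp only [← map_symmDiff']
    exact ⟨h_disj (b ∆ b') h.1, h_le (c ∆ c') h.2⟩
  choose b c hbc using fun z : BooleanSubalgebra.closure (insert a (L : Set α)) ↦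
    mem_closure_insert_iff.1 z.2
  have h_eq (z : BooleanSubalgebra.closure (insert a (L : Set α))) (b' c' : L)
      (h : (z : α) = mix a b' c') : mix x (f (b z)) (f (c z)) = mix x (f b') (f c') :=
    h_wd _ _ _ _ ((hbc z).symm.trans h)
  refine ⟨⟨⟨⟨fun z ↦ mix x (f (b z)) (f (c z)), fun z z' ↦ ?_⟩, fun z z' ↦ ?_⟩, ?_, ?_⟩, h_eq⟩
  · rw [mix_sup_mix, ← map_sup, ← map_sup]
    exact h_eq _ _ _ (by simp [hbc z, hbc z', mix_sup_mix])
  · simp only [mix_inf_mix, ← map_inf]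
    exact h_eq _ _ _ (by simp [hbc z, hbc z', mix_inf_mix])
  · change mix x _ _ = _
    rw [h_eq ⊤ ⊤ ⊤ (mix_self a ⊤).symm, map_top, mix_self]
  · change mix x _ _ = _
    rw [h_eq ⊥ ⊥ ⊥ (mix_self a ⊥).symm, map_bot, mix_self]

end Extension

section Density

variable {X Y C : Set ℕ} {r s c : ℝ}

/-- The number of elements of `X` in `{1, …, n}`, the numerator in the definition of asymptotic
density. -/
noncomputable def countUpTo (X : Set ℕ) (n : ℕ) : ℕ := (X ∩ Icc 1 n).ncard

@[simp]
lemma countUpTo_zero (X : Set ℕ) : countUpTo X 0 = 0 := by simp [countUpTo]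

open Classical in
lemma countUpTo_succ (X : Set ℕ) (n : ℕ) :
    countUpTo X (n + 1) = countUpTo X n + if n + 1 ∈ X then 1 else 0 := by
  have h_Icc : Icc 1 (n + 1) = insert (n + 1) (Icc 1 n) := by ext; simp; lia
  rw [countUpTo, countUpTo, h_Icc]
  split_ifs with h
  · rw [inter_insert_of_mem h, ncard_insert_of_notMem (by simp) ((finite_Icc 1 n).inter_of_right X)]
  · rw [inter_insert_of_notMem h, add_zero]

lemma countUpTo_mono_right (X : Set ℕ) : Monotone (countUpTo X) :=
  monotone_nat_of_le_succ fun n ↦ by simp [countUpTo_succ]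

lemma countUpTo_le (X : Set ℕ) (n : ℕ) : countUpTo X n ≤ n := by
  induction n with
  | zero => simp
  | succ n ih => rw [countUpTo_succ]; split_ifs <;> lia

lemma countUpTo_union (h : Disjoint X Y) (n : ℕ) :
    countUpTo (X ∪ Y) n = countUpTo X n + countUpTo Y n := by
  rw [countUpTo, union_inter_distrib_right,
    ncard_union_eq (h.mono inter_subset_left inter_subset_left)
      ((finite_Icc 1 n).inter_of_right X) ((finite_Icc 1 n).inter_of_right Y),
    countUpTo, countUpTo]

lemma countUpTo_add_countUpTo_of_forall_mem_Ioc {k m : ℕ} (hkm : k ≤ m)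
    (h : ∀ j ∈ Ioc k m, j ∈ X ↔ j ∈ Y) :
    countUpTo X m + countUpTo Y k = countUpTo Y m + countUpTo X k := by
  induction m, hkm using Nat.le_induction with
  | base => exact add_comm ..
  | succ m hkm ih =>
    have h_last : m + 1 ∈ X ↔ m + 1 ∈ Y := h (m + 1) ⟨by lia, le_rfl⟩
    have h_prev := ih fun j hj ↦ h j ⟨hj.1, hj.2.trans m.le_succ⟩
    simp only [countUpTo_succ, h_last]
    lia

lemma hasDensity_iff_tendsto :
    HasDensity X r ↔ Tendsto (fun n ↦ (countUpTo X n / n : ℝ)) atTop (𝓝 r) := Iff.rfl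

lemma hasDensity_iff_abs_sub_le :
    HasDensity X r ↔ ∀ ε > 0, ∀ᶠ m : ℕ in atTop, |(countUpTo X m : ℝ) - r * m| ≤ ε * m := by
  have h_div {m : ℕ} (hm : 0 < m) :
      |(countUpTo X m : ℝ) / m - r| = |(countUpTo X m : ℝ) - r * m| / m := by
    have hm' : (0 : ℝ) < m := by exact_mod_cast hm
    rw [← abs_of_pos hm', ← abs_div, abs_of_pos hm', sub_div, mul_div_cancel_right₀ _ hm'.ne']
  rw [hasDensity_iff_tendsto, Metric.nhds_basis_closedBall.tendsto_right_iff]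
  refine forall₂_congr fun ε _ ↦ Filter.eventually_congr ?_
  filter_upwards [Filter.eventually_gt_atTop 0] with m hm
  rw [Metric.mem_closedBall, Real.dist_eq, h_div hm, div_le_iff₀ (by exact_mod_cast hm)]

lemma HasDensity.unique (hr : HasDensity X r) (hs : HasDensity X s) : r = s :=
  tendsto_nhds_unique hr hs

lemma HasDensity.union (hX : HasDensity X r) (hY : HasDensity Y s) (h : Disjoint X Y) :
    HasDensity (X ∪ Y) (r + s) := by
  rw [hasDensity_iff_tendsto] at *
  simpa only [countUpTo_union h, Nat.cast_add, add_div] using hX.add hY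

lemma HasDensity.sdiff (hX : HasDensity X r) (hY : HasDensity Y s) (h : Y ⊆ X) :
    HasDensity (X \ Y) (r - s) := by
  have h_count (n : ℕ) : (countUpTo (X \ Y) n : ℝ) = countUpTo X n - countUpTo Y n := by
    rw [eq_sub_iff_add_eq, ← Nat.cast_add, ← countUpTo_union disjoint_sdiff_left,
      sdiff_union_of_subset h]
  rw [hasDensity_iff_tendsto] at *
  simpa only [h_count, sub_div] using hX.sub hY

lemma hasDensity_zero_of_finite (h : X.Finite) : HasDensity X 0 := by
  refine squeeze_zero (fun n ↦ by positivity) (fun n ↦ ?_)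
    (tendsto_const_div_atTop_nhds_zero_nat (X.ncard : ℝ))
  gcongr
  exact inter_subset_left

lemma HasDensity.congr (hX : HasDensity X r) (h : (X ∆ Y).Finite) : HasDensity Y r := by
  have hXY := hX.sdiff (hasDensity_zero_of_finite (h.subset le_sup_left)) sdiff_subset
  have hYX := hasDensity_zero_of_finite (h.subset le_sup_right)
  rw [sdiff_sdiff_right_self] at hXY
  simpa [inf_eq_inter, inter_union_sdiff, inter_comm X] using
    hXY.union hYX (disjoint_sdiff_right.mono_left inter_subset_left)

lemma exists_countUpTo_eq {u : ℕ → ℕ} (h_zero : u 0 = 0) (h_mono : ∀ n, u n ≤ u (n + 1))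
    (h_succ : ∀ n, u (n + 1) ≤ u n + 1) :
    ∃ Y : Set ℕ, (∀ n, n + 1 ∈ Y ↔ u n < u (n + 1)) ∧ 0 ∉ Y ∧ countUpTo Y = u := by
  refine ⟨{n | 0 < n ∧ u (n - 1) < u n}, by simp, by simp, funext fun n ↦ ?_⟩
  induction n with
  | zero => simp [h_zero]
  | succ n ih =>
    have := h_mono n
    have := h_succ n
    simp only [countUpTo_succ, ih, mem_ofPred_eq, Nat.add_sub_cancel]
    split_ifs <;> lia

open Classical in
lemma HasDensity.exists_subset (hC : HasDensity C c) (hr : 0 ≤ r) (hrc : r ≤ c) :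
    ∃ Y ⊆ C, HasDensity Y r := by
  set θ : ℝ := r / c
  have hθ_nonneg : 0 ≤ θ := div_nonneg hr (hr.trans hrc)
  have hθ_le_one : θ ≤ 1 := div_le_one_of_le₀ hrc (hr.trans hrc)
  have hθ_mul : θ * c = r := div_mul_cancel_of_imp fun hc ↦ le_antisymm (hc ▸ hrc) hr
  -- A greedy choice of elements of `C` gives a subset with this counting function.
  set u : ℕ → ℕ := fun n ↦ ⌊θ * countUpTo C n⌋₊ with hu
  have hu_mono (n : ℕ) : u n ≤ u (n + 1) := by
    simp only [hu]
    gcongr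
    exact countUpTo_mono_right C n.le_succ
  have hu_succ (n : ℕ) : u (n + 1) ≤ u n + if n + 1 ∈ C then 1 else 0 := by
    simp only [hu, countUpTo_succ]
    split_ifs
    · rw [← Nat.floor_add_one (by positivity)]
      gcongr
      push_cast
      linarith
    · simp
  obtain ⟨Y, hY_mem, hY_zero, hY_count⟩ := exists_countUpTo_eq (by simp [hu]) hu_mono
    fun n ↦ (hu_succ n).trans (by split_ifs <;> simp)
  refine ⟨Y, fun n hn ↦ ?_, ?_⟩
  · obtain _ | n := n
    · exact absurd hn hY_zero
    · by_contra hnC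
      exact ((hY_mem n).1 hn).not_ge (by simpa [hnC] using hu_succ n)
  · have h_lim : Tendsto (fun n : ℕ ↦ θ * (countUpTo C n / n)) atTop (𝓝 r) :=
      hθ_mul ▸ hC.const_mul θ
    rw [hasDensity_iff_tendsto, hY_count]
    refine tendsto_of_tendsto_of_tendsto_of_le_of_le
      (by simpa using h_lim.sub tendsto_one_div_atTop_nhds_zero_nat) h_lim
      (fun n ↦ ?_) (fun n ↦ ?_)
    · rw [mul_div_assoc', ← one_div, ← sub_div]
      gcongr
      exact (Nat.sub_one_lt_floor _).le
    · rw [mul_div_assoc']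
      gcongr
      exact Nat.floor_le (by positivity)

end Density

section Diagonal

variable {k : ℕ → ℕ}

lemma exists_strictMono_forall_ge {P : ℕ → ℕ → Prop} (hP : ∀ n, ∀ᶠ m in atTop, P n m) :
    ∃ k : ℕ → ℕ, StrictMono k ∧ (∀ n, n * k n ≤ k (n + 1)) ∧ ∀ n, ∀ m ≥ k n, P n m := by
  choose K hK using fun n ↦ Filter.eventually_atTop.1 (hP n)
  let k : ℕ → ℕ := Nat.rec (K 0) fun n p ↦ (n + 1) * p + K (n + 1) + 1
  have hk_succ (n : ℕ) : k (n + 1) = (n + 1) * k n + K (n + 1) + 1 := rfl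
  have hK_le (n : ℕ) : K n ≤ k n := by
    cases n with
    | zero => exact le_rfl
    | succ n => rw [hk_succ]; lia
  exact ⟨k, strictMono_nat_of_lt_succ fun n ↦ by rw [hk_succ]; nlinarith,
    fun n ↦ by rw [hk_succ]; nlinarith, fun n m hm ↦ hK n m ((hK_le n).trans hm)⟩

lemma exists_ge_mem_Ioc_succ (hk : StrictMono k) {N m : ℕ} (hm : k N < m) :
    ∃ n ≥ N, m ∈ Ioc (k n) (k (n + 1)) := by
  have h_mem : m ∈ Ioc (k N) (k m) := ⟨hm, hk.le_apply⟩
  rw [← hk.monotone.biUnion_Ico_Ioc_map_succ] at h_mem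
  obtain ⟨n, hn, hmn⟩ := mem_iUnion₂.1 h_mem
  exact ⟨n, hn.1, hmn⟩

lemma exists_forall_mem_Ioc_mem_iff (hk : Monotone k) (X : ℕ → Set ℕ) :
    ∃ Y : Set ℕ, ∀ n, ∀ m ∈ Ioc (k n) (k (n + 1)), m ∈ Y ↔ m ∈ X n := by
  refine ⟨⋃ n, X n ∩ Ioc (k n) (k (n + 1)), fun n m hm ↦ ?_⟩
  refine ⟨fun h ↦ ?_, fun h ↦ mem_iUnion.2 ⟨n, h, hm⟩⟩
  obtain ⟨n', hX, hm'⟩ := mem_iUnion.1 h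
  rwa [hk.pairwise_disjoint_on_Ioc_succ.eq (not_disjoint_iff.2 ⟨m, hm, hm'⟩)]

lemma abs_countUpTo_sub_le_of_forall_mem_Ioc {W W' Y : Set ℕ} {l k m : ℕ} (r : ℝ) (hlk : l ≤ k)
    (hkm : k ≤ m) (hW : ∀ j ∈ Ioc l k, j ∈ Y ↔ j ∈ W) (hW' : ∀ j ∈ Ioc k m, j ∈ Y ↔ j ∈ W') :
    |(countUpTo Y m : ℝ) - r * m| ≤ |(countUpTo W' m : ℝ) - r * m| +
      |(countUpTo W' k : ℝ) - r * k| + |(countUpTo W k : ℝ) - r * k| + l := by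
  have h_last : (countUpTo Y m + countUpTo W' k : ℝ) = countUpTo W' m + countUpTo Y k := by
    exact_mod_cast countUpTo_add_countUpTo_of_forall_mem_Ioc hkm hW'
  have h_prev : (countUpTo Y k + countUpTo W l : ℝ) = countUpTo W k + countUpTo Y l := by
    exact_mod_cast countUpTo_add_countUpTo_of_forall_mem_Ioc hlk hW
  have h_start : |(countUpTo Y l : ℝ) - countUpTo W l| ≤ l :=
    abs_sub_le_of_nonneg_of_le (by positivity) (by exact_mod_cast countUpTo_le Y l)
      (by positivity) (by exact_mod_cast countUpTo_le W l)
  calc |(countUpTo Y m : ℝ) - r * m|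
      = |(countUpTo W' m - r * m) - (countUpTo W' k - r * k) + (countUpTo W k - r * k) +
          (countUpTo Y l - countUpTo W l)| := by congr 1; linarith
    _ ≤ _ := (abs_add_le ..).trans <| add_le_add ((abs_add_le ..).trans <|
          add_le_add_left (abs_sub ..) _) h_start

lemma hasDensity_of_forall_mem_Ioc {X : ℕ → Set ℕ} {Y : Set ℕ} {r : ℝ} (hk : StrictMono k)
    (hk_mul : ∀ n, n * k n ≤ k (n + 1))
    (hY : ∀ n, ∀ m ∈ Ioc (k n) (k (n + 1)), m ∈ Y ↔ m ∈ X n)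
    (hX : ∀ ε > 0, ∀ᶠ n in atTop, ∀ m ≥ k n, |(countUpTo (X n) m : ℝ) - r * m| ≤ ε * m) :
    HasDensity Y r := by
  refine hasDensity_iff_abs_sub_le.2 fun ε hε ↦ ?_
  obtain ⟨N, hN⟩ := Filter.eventually_atTop.1 <| (hX (ε / 4) (by positivity)).and <|
    tendsto_natCast_atTop_atTop.eventually_ge_atTop (4 / ε)
  filter_upwards [Filter.eventually_gt_atTop (k (N + 1))] with m hm
  obtain ⟨n', hn', hkm, hmk⟩ := exists_ge_mem_Ioc_succ hk hm
  obtain ⟨n, rfl⟩ := Nat.exists_eq_add_one_of_ne_zero (show n' ≠ 0 by lia)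
  have hn : N ≤ n := by lia
  have hkm' : (k (n + 1) : ℝ) ≤ m := by exact_mod_cast hkm.le
  -- The initial segment up to `k n`, where `Y` is not under control, is negligible.
  have h_start : (k n : ℝ) ≤ ε / 4 * k (n + 1) :=
    calc (k n : ℝ) = ε / 4 * (4 / ε * k n) := by field_simp
      _ ≤ ε / 4 * (n * k n) := by gcongr; exact (hN n hn).2
      _ ≤ ε / 4 * k (n + 1) := by gcongr; exact_mod_cast hk_mul n
  calc |(countUpTo Y m : ℝ) - r * m|
      ≤ ε / 4 * m + ε / 4 * k (n + 1) + ε / 4 * k (n + 1) + ε / 4 * k (n + 1) := by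
        refine (abs_countUpTo_sub_le_of_forall_mem_Ioc r (hk n.lt_succ_self).le hkm.le (hY n)
          fun j hj ↦ hY (n + 1) j ⟨hj.1, hj.2.trans hmk⟩).trans ?_
        gcongr
        exacts [(hN (n + 1) (by lia)).1 m hkm.le, (hN (n + 1) (by lia)).1 _ le_rfl,
          (hN n hn).1 _ (hk n.lt_succ_self).le]
    _ ≤ ε / 4 * m + ε / 4 * m + ε / 4 * m + ε / 4 * m := by gcongr
    _ = ε * m := by ring

lemma almostEq_iff_eventually {X Y : Set ℕ} :
    AlmostEq X Y ↔ ∀ᶠ m in atTop, m ∈ X ↔ m ∈ Y := by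
  rw [AlmostEq, ← Nat.cofinite_eq_atTop, Filter.eventually_cofinite]
  congr! 2 with m
  grind

lemma exists_diagonal (X B : ℕ → Set ℕ) (r : ℕ → ℝ) :
    ∃ Y : Set ℕ, ∀ i,
      ((∀ n > i, HasDensity (X n ∩ B i) (r i)) → HasDensity (Y ∩ B i) (r i)) ∧
      ∀ Z, (∀ n > i, AlmostEq (X n ∩ B i) Z) → AlmostEq (Y ∩ B i) Z := by
  let P (n m : ℕ) : Prop := ∀ i < n,
    (HasDensity (X n ∩ B i) (r i) → |(countUpTo (X n ∩ B i) m : ℝ) - r i * m| ≤ 1 / n * m) ∧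
    (AlmostEq (X n ∩ B i) (X (i + 1) ∩ B i) → (m ∈ X n ∩ B i ↔ m ∈ X (i + 1) ∩ B i))
  have hP (n : ℕ) : ∀ᶠ m in atTop, P n m := by
    refine (Filter.eventually_all_finite (finite_lt_nat n)).2 fun i hi ↦ Filter.Eventually.and ?_ ?_
    · refine Filter.eventually_imp_distrib_left.2 fun h ↦ hasDensity_iff_abs_sub_le.1 h _ ?_
      exact Nat.one_div_cast_pos (Nat.ne_zero_of_lt hi)
    · exact Filter.eventually_imp_distrib_left.2 almostEq_iff_eventually.1
  obtain ⟨k, hk, hk_mul, hk_ge⟩ := exists_strictMono_forall_ge hP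
  obtain ⟨Y, hY⟩ := exists_forall_mem_Ioc_mem_iff hk.monotone X
  have hYB (i n m : ℕ) (hm : m ∈ Ioc (k n) (k (n + 1))) : m ∈ Y ∩ B i ↔ m ∈ X n ∩ B i :=
    and_congr_left' (hY n m hm)
  refine ⟨Y, fun i ↦ ⟨fun h ↦ ?_, fun Z h ↦ ?_⟩⟩
  · refine hasDensity_of_forall_mem_Ioc hk hk_mul (hYB i) fun ε hε ↦ ?_
    filter_upwards [Filter.eventually_gt_atTop i,
      tendsto_one_div_atTop_nhds_zero_nat.eventually_le_const hε] with n hin hn m hm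
    exact ((hk_ge n m hm i hin).1 (h n hin)).trans (by gcongr)
  · simp only [almostEq_iff_eventually] at h ⊢
    have hZ := h (i + 1) i.lt_succ_self
    filter_upwards [Filter.eventually_gt_atTop (k (i + 1)), hZ] with m hm hmZ
    obtain ⟨n, hn, hmn⟩ := exists_ge_mem_Ioc_succ hk hm
    rw [hYB i n m hmn, ← hmZ]
    refine (hk_ge n m hmn.1.le i hn).2 (almostEq_iff_eventually.2 ?_)
    filter_upwards [h n hn, hZ] with j hj hj'
    rw [hj, hj']

end Diagonal

section PFin

variable {β : Type*}

instance {α : Type} : Max (PFin α) := ⟨PFin.sup⟩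
instance {α : Type} : Min (PFin α) := ⟨PFin.inf⟩
instance {α : Type} : Top (PFin α) := ⟨PFin.top⟩
instance {α : Type} : Bot (PFin α) := ⟨PFin.bot⟩
instance {α : Type} : Compl (PFin α) := ⟨PFin.compl⟩

lemma PFin.mk_surjective {α : Type} : Function.Surjective (PFin.mk : Set α → PFin α) :=
  Quotient.mk_surjective

instance {α : Type} : BooleanAlgebra (PFin α) :=
  booleanAlgebraOfSurjective PFin.mk PFin.mk_surjective (fun _ _ ↦ rfl) (fun _ _ ↦ rfl) rfl rfl
    fun _ ↦ rfl

lemma PFin.mk_eq_mk_iff {α : Type} {X Y : Set α} : PFin.mk X = PFin.mk Y ↔ AlmostEq X Y :=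
  Quotient.eq

lemma PFin.mk_sdiff {α : Type} (X Y : Set α) : PFin.mk (X \ Y) = PFin.mk X \ PFin.mk Y := by
  rw [Set.sdiff_eq, _root_.sdiff_eq]
  rfl

/-- Every representative of the class `x` has asymptotic density `r`, so that
`MeasurePreservingOn L φ` is this condition on the classes `φ b` with `b ∈ L`. -/
def HasClassDensity (x : PFin ℕ) (r : ℝ) : Prop := ∀ X : Set ℕ, PFin.mk X = x → HasDensity X r

variable {x y : PFin ℕ} {r s : ℝ}

lemma hasClassDensity_mk_iff {X : Set ℕ} : HasClassDensity (PFin.mk X) r ↔ HasDensity X r :=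
  ⟨fun h ↦ h X rfl, fun h _ hY ↦ h.congr (PFin.mk_eq_mk_iff.1 hY.symm)⟩

lemma HasClassDensity.unique (hr : HasClassDensity x r) (hs : HasClassDensity x s) : r = s := by
  obtain ⟨X, rfl⟩ := PFin.mk_surjective x
  exact (hr X rfl).unique (hs X rfl)

lemma hasClassDensity_bot : HasClassDensity ⊥ 0 :=
  hasClassDensity_mk_iff.2 (hasDensity_zero_of_finite finite_empty)

lemma HasClassDensity.sdiff (hx : HasClassDensity x r) (hy : HasClassDensity y s) (h : y ≤ x) :
    HasClassDensity (x \ y) (r - s) := by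
  obtain ⟨X, rfl⟩ := PFin.mk_surjective x
  obtain ⟨Y, rfl⟩ := PFin.mk_surjective y
  have h_inter : PFin.mk (X ∩ Y) = PFin.mk Y := inf_eq_right.2 h
  rw [← h_inter] at hy ⊢
  rw [hasClassDensity_mk_iff] at hx hy
  rw [← PFin.mk_sdiff, hasClassDensity_mk_iff]
  exact hx.sdiff hy inter_subset_left

lemma HasClassDensity.sup (hx : HasClassDensity x r) (hy : HasClassDensity y s)
    (h : Disjoint x y) : HasClassDensity (x ⊔ y) (r + s) := by
  obtain ⟨X, rfl⟩ := PFin.mk_surjective x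
  obtain ⟨Y, rfl⟩ := PFin.mk_surjective y
  have h_sdiff : PFin.mk (Y \ X) = PFin.mk Y := by rw [PFin.mk_sdiff, h.sdiff_eq_right]
  rw [← h_sdiff] at hy ⊢
  rw [hasClassDensity_mk_iff] at hx hy
  exact hasClassDensity_mk_iff.2 (hx.union hy disjoint_sdiff_right)

lemma HasClassDensity.exists_le (hx : HasClassDensity x r) (hs : 0 ≤ s) (hsr : s ≤ r) :
    ∃ y ≤ x, HasClassDensity y s := by
  obtain ⟨X, rfl⟩ := PFin.mk_surjective x
  obtain ⟨Y, hYX, hY⟩ := (hx X rfl).exists_subset hs hsr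
  have h_inter : PFin.mk (Y ∩ X) = PFin.mk Y := by rw [inter_eq_left.2 hYX]
  exact ⟨PFin.mk Y, inf_eq_left.1 h_inter, hasClassDensity_mk_iff.2 hY⟩

lemma exists_diagonal_class (x b : ℕ → PFin ℕ) (r : ℕ → ℝ) :
    ∃ y, ∀ i, ((∀ n > i, HasClassDensity (x n ⊓ b i) (r i)) → HasClassDensity (y ⊓ b i) (r i)) ∧
      ∀ z, (∀ n > i, x n ⊓ b i = z) → y ⊓ b i = z := by
  choose X hX using fun n ↦ PFin.mk_surjective (x n)
  choose B hB using fun n ↦ PFin.mk_surjective (b n)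
  obtain rfl := funext hX
  obtain rfl := funext hB
  obtain ⟨Y, hY⟩ := exists_diagonal X B r
  have h_inf (S T : Set ℕ) : PFin.mk S ⊓ PFin.mk T = PFin.mk (S ∩ T) := rfl
  refine ⟨PFin.mk Y, fun i ↦ ?_⟩
  simpa only [PFin.mk_surjective.forall, h_inf, hasClassDensity_mk_iff, PFin.mk_eq_mk_iff]
    using hY i

lemma injective_of_hasClassDensity [BooleanAlgebra β] {g : BoundedLatticeHom β (PFin ℕ)}
    {μ : β → ℝ} (hμ : ∀ z, μ z = 0 → z = ⊥) (hg : ∀ z, HasClassDensity (g z) (μ z)) :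
    Function.Injective g := fun y z h ↦ by
  rw [← symmDiff_eq_bot] at h ⊢
  rw [← map_symmDiff'] at h
  exact hμ _ ((hg _).unique (h ▸ hasClassDensity_bot))

end PFin

section Trace

variable {α : Type*} [BooleanAlgebra α] {μ : α → ℝ≥0} {a b b' : α} {y y' w w' : PFin ℕ}

/-- The class `w ≤ y` can serve as the image of `b ⊓ a` under a measure-preserving extension of an
embedding which takes `b` to `y`. The only order relations to be respected are the two degenerate
ones, `b ≤ a` and `b` disjoint from `a`. -/
structure IsTrace (μ : α → ℝ≥0) (a b : α) (y w : PFin ℕ) : Prop where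
  le : w ≤ y
  hasClassDensity : HasClassDensity w (μ (b ⊓ a))
  eq_of_le : b ≤ a → w = y
  eq_bot_of_disjoint : Disjoint b a → w = ⊥

lemma IsTrace.sup (hμ : ∀ b c, Disjoint b c → μ (b ⊔ c) = μ b + μ c) (h : IsTrace μ a b y w)
    (h' : IsTrace μ a b' y' w') (hb : Disjoint b b') (hy : Disjoint y y') :
    IsTrace μ a (b ⊔ b') (y ⊔ y') (w ⊔ w') where
  le := sup_le_sup h.le h'.le
  hasClassDensity := by
    rw [inf_sup_right, hμ _ _ (hb.mono inf_le_left inf_le_left), NNReal.coe_add]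
    exact h.hasClassDensity.sup h'.hasClassDensity (hy.mono h.le h'.le)
  eq_of_le hle := by
    rw [h.eq_of_le (le_sup_left.trans hle), h'.eq_of_le (le_sup_right.trans hle)]
  eq_bot_of_disjoint hd := by
    rw [disjoint_sup_left] at hd
    rw [h.eq_bot_of_disjoint hd.1, h'.eq_bot_of_disjoint hd.2, sup_bot_eq]

lemma exists_isTrace (hμ : ∀ b c, Disjoint b c → μ (b ⊔ c) = μ b + μ c) (a : α)
    (hb : HasClassDensity y (μ b)) (hy : b = ⊥ → y = ⊥) : ∃ w, IsTrace μ a b y w := by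
  have hμ_bot : μ ⊥ = 0 := by simpa using hμ ⊥ ⊥ disjoint_bot_left
  by_cases h_le : b ≤ a
  · refine ⟨y, le_rfl, by rwa [inf_eq_left.2 h_le], fun _ ↦ rfl, fun h_disj ↦ ?_⟩
    exact hy (h_disj.eq_bot_of_le h_le)
  by_cases h_disj : Disjoint b a
  · exact ⟨⊥, bot_le, by simpa [h_disj.eq_bot, hμ_bot] using hasClassDensity_bot,
      fun h ↦ absurd h h_le, fun _ ↦ rfl⟩
  have hμ_le : μ (b ⊓ a) ≤ μ b := by
    rw [← sup_inf_sdiff b a, hμ _ _ disjoint_inf_sdiff, sup_inf_sdiff]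
    exact le_self_add
  obtain ⟨w, hwy, hw⟩ := hb.exists_le (NNReal.coe_nonneg _) (NNReal.coe_le_coe.2 hμ_le)
  exact ⟨w, hwy, hw, fun h ↦ absurd h h_le, fun h ↦ absurd h h_disj⟩

variable {L : BooleanSubalgebra α} {f : BoundedLatticeHom L (PFin ℕ)}

lemma exists_isTrace_forall_mem (hμ : ∀ b c, Disjoint b c → μ (b ⊔ c) = μ b + μ c)
    (hf : ∀ b : L, HasClassDensity (f b) (μ b)) (a : α) (s : Finset L) (c : L) :
    ∃ w, IsTrace μ a c (f c) w ∧ ∀ b ∈ s, IsTrace μ a ↑(c ⊓ b) (f (c ⊓ b)) (w ⊓ f b) := by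
  classical
  induction s using Finset.induction_on generalizing c with
  | empty =>
    obtain ⟨w, hw⟩ := exists_isTrace hμ a (hf c) fun h ↦ by
      rw [Subtype.ext (a2 := ⊥) h, map_bot]
    exact ⟨w, hw, by simp⟩
  | insert q s _ ih =>
    obtain ⟨w, hw, hws⟩ := ih (c ⊓ q)
    obtain ⟨w', hw', hws'⟩ := ih (c \ q)
    have h_sup {d d' : L} {v v' : PFin ℕ} (h : IsTrace μ a d (f d) v)
        (h' : IsTrace μ a d' (f d') v') (hd : Disjoint d d') :
        IsTrace μ a ↑(d ⊔ d') (f (d ⊔ d')) (v ⊔ v') := by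
      rw [map_sup]
      exact h.sup hμ h' (disjoint_iff.2 (congrArg Subtype.val hd.eq_bot)) (Disjoint.map f hd)
    have hw_le : w ≤ f q := hw.le.trans (OrderHomClass.mono f inf_le_right)
    have hw_disj : Disjoint w' (f q) := (Disjoint.map f disjoint_sdiff_self_left).mono_left hw'.le
    refine ⟨w ⊔ w', ?_, Finset.forall_mem_insert .. |>.2 ⟨?_, fun b hb ↦ ?_⟩⟩
    · rw [← sup_inf_sdiff c q]
      exact h_sup hw hw' disjoint_inf_sdiff
    · rwa [inf_sup_right, inf_eq_left.2 hw_le, hw_disj.eq_bot, sup_bot_eq]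
    · rw [← sup_inf_sdiff c q, inf_sup_right, inf_sup_right]
      exact h_sup (hws b hb) (hws' b hb) (disjoint_inf_sdiff.mono inf_le_left inf_le_left)

lemma exists_forall_isTrace [Countable L] (hμ : ∀ b c, Disjoint b c → μ (b ⊔ c) = μ b + μ c)
    (hf : ∀ b : L, HasClassDensity (f b) (μ b)) (a : α) :
    ∃ x, ∀ b : L, IsTrace μ a b (f b) (x ⊓ f b) := by
  classical
  obtain ⟨e, he⟩ := exists_surjective_nat L
  choose x _ hx using fun n ↦
    exists_isTrace_forall_mem hμ hf a ((Finset.range n).image e) ⊤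
  have hx' (n i : ℕ) (hin : i < n) : IsTrace μ a (e i) (f (e i)) (x n ⊓ f (e i)) := by
    simpa only [top_inf_eq] using hx n (e i) (Finset.mem_image_of_mem e (Finset.mem_range.2 hin))
  obtain ⟨y, hy⟩ := exists_diagonal_class x (f ∘ e) fun i ↦ μ (e i ⊓ a)
  refine ⟨y, he.forall.2 fun i ↦ ⟨inf_le_right, (hy i).1 fun n hn ↦ (hx' n i hn).hasClassDensity,
    fun h ↦ (hy i).2 _ fun n hn ↦ (hx' n i hn).eq_of_le h,
    fun h ↦ (hy i).2 _ fun n hn ↦ (hx' n i hn).eq_bot_of_disjoint h⟩⟩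

end Trace

theorem measure_preserving_extension_countable_general {α : Type*} [BooleanAlgebra α] {μ : α → ℝ≥0}
    (hμ : ∀ b c, Disjoint b c → μ (b ⊔ c) = μ b + μ c) (L : BooleanSubalgebra α) [Countable L]
    (a : α) (f : BoundedLatticeHom L (PFin ℕ)) (hf : ∀ b : L, HasClassDensity (f b) (μ b)) :
    ∃ g : BoundedLatticeHom (BooleanSubalgebra.closure (insert a (L : Set α))) (PFin ℕ),
      (∀ (z : BooleanSubalgebra.closure (insert a (L : Set α))) (b : L), (z : α) = b → g z = f b) ∧
      ∀ z, HasClassDensity (g z) (μ z) := by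
  obtain ⟨x, hx⟩ := exists_forall_isTrace hμ hf a
  obtain ⟨g, hg⟩ := exists_boundedLatticeHom_closure_insert f (a := a) (x := x)
    (fun b h ↦ disjoint_iff.2 (inf_comm x _ ▸ (hx b).eq_bot_of_disjoint h))
    (fun b h ↦ inf_eq_right.1 ((hx b).eq_of_le h))
  refine ⟨g, fun z b hz ↦ ?_, fun z ↦ ?_⟩
  · rw [hg z b b (hz.trans (mix_self a _).symm), mix_self]
  obtain ⟨b, c, hz⟩ := mem_closure_insert_iff.1 z.2
  have h_inf : HasClassDensity (f b ⊓ x) (μ (b ⊓ a)) := inf_comm x _ ▸ (hx b).hasClassDensity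
  have h_sdiff : HasClassDensity (f c \ x) (μ (c \ a)) := by
    have h_μ : μ c = μ (c ⊓ a) + μ (c \ a) := by rw [← hμ _ _ disjoint_inf_sdiff, sup_inf_sdiff]
    simpa [h_μ] using (hf c).sdiff (hx c).hasClassDensity (hx c).le
  rw [hg z b c hz, hz, mix, mix, hμ _ _ (disjoint_sdiff_self_right.mono_left inf_le_right)]
  exact h_inf.sup h_sdiff (disjoint_sdiff_self_right.mono_left inf_le_right)

section MeasureAlgebra

instance : Max MAlgI := ⟨MAlgI.sup⟩
instance : Min MAlgI := ⟨MAlgI.inf⟩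
instance : Top MAlgI := ⟨MAlgI.top⟩
instance : Bot MAlgI := ⟨MAlgI.bot⟩
instance : Compl MAlgI := ⟨MAlgI.compl⟩

/-- The class in the measure algebra of the trace on `(0, 1]` of a Borel set of reals. Unlike
`ISet`, its domain carries a Boolean algebra structure in Mathlib, which it transports to `MAlgI`.
-/
def MAlgI.restrict (A : {A : Set ℝ // MeasurableSet A}) : MAlgI :=
  MAlgI.mk ⟨A ∩ Ioc 0 1, A.2.inter measurableSet_Ioc, inter_subset_right⟩

lemma MAlgI.mk_surjective : Function.Surjective MAlgI.mk := Quotient.mk_surjective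

lemma MAlgI.restrict_surjective : Function.Surjective MAlgI.restrict :=
  MAlgI.mk_surjective.forall.2 fun A ↦ ⟨⟨A, A.2.1⟩, by
    simp only [MAlgI.restrict, inter_eq_left.2 A.2.2]⟩

noncomputable instance : BooleanAlgebra MAlgI :=
  booleanAlgebraOfSurjective MAlgI.restrict MAlgI.restrict_surjective
    (fun A B ↦ congrArg MAlgI.mk <| Subtype.ext <| union_inter_distrib_right ..)
    (fun A B ↦ congrArg MAlgI.mk <| Subtype.ext <| inter_inter_distrib_right ..)
    (congrArg MAlgI.mk <| Subtype.ext <| univ_inter _)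
    (congrArg MAlgI.mk <| Subtype.ext <| empty_inter _)
    (fun A ↦ congrArg MAlgI.mk <| Subtype.ext <| by
      change (A : Set ℝ)ᶜ ∩ Ioc 0 1 = Ioc 0 1 \ (A ∩ Ioc 0 1)
      grind)

lemma mval_eq_zero_iff {z : MAlgI} : mval z = 0 ↔ z = ⊥ := by
  obtain ⟨A, rfl⟩ := MAlgI.mk_surjective z
  refine Iff.trans ?_ (Quotient.eq (r := measSetoidI)).symm
  change volume (A : Set ℝ) = 0 ↔ volume ((A : Set ℝ) ∆ ∅) = 0
  rw [← bot_eq_empty, symmDiff_bot]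

lemma mval_ne_top (z : MAlgI) : mval z ≠ ∞ := by
  obtain ⟨A, rfl⟩ := MAlgI.mk_surjective z
  exact measure_ne_top_of_subset A.2.2 measure_Ioc_lt_top.ne

lemma mval_sup {y z : MAlgI} (h : Disjoint y z) : mval (y ⊔ z) = mval y + mval z := by
  obtain ⟨A, rfl⟩ := MAlgI.mk_surjective y
  obtain ⟨B, rfl⟩ := MAlgI.mk_surjective z
  -- `A` and `B` themselves need only be disjoint up to a null set.
  exact measure_union₀ B.2.1.nullMeasurableSet (mval_eq_zero_iff.2 h.eq_bot)

lemma toReal_mval_eq_zero_iff {z : MAlgI} : (mval z).toReal = 0 ↔ z = ⊥ := by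
  rw [ENNReal.toReal_eq_zero_iff, or_iff_left (mval_ne_top z), mval_eq_zero_iff]

lemma toNNReal_mval_sup {y z : MAlgI} (h : Disjoint y z) :
    (mval (y ⊔ z)).toNNReal = (mval y).toNNReal + (mval z).toNNReal := by
  rw [mval_sup h, ENNReal.toNNReal_add (mval_ne_top y) (mval_ne_top z)]

variable {L : Set MAlgI}

/-- The bundled form of a subalgebra of the measure algebra, through which Mathlib's theory of
Boolean subalgebras applies to it. -/
def IsSubalgebra.toBooleanSubalgebra (hL : IsSubalgebra L) : BooleanSubalgebra MAlgI where
  carrier := L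
  supClosed' a ha b hb := hL.sup_mem a ha b hb
  infClosed' a ha b hb := hL.inf_mem a ha b hb
  compl_mem' ha := hL.compl_mem _ ha
  bot_mem' := hL.bot_mem

lemma isSubalgebra_coe (M : BooleanSubalgebra MAlgI) : IsSubalgebra (M : Set MAlgI) where
  bot_mem := M.bot_mem
  top_mem := M.top_mem
  sup_mem _ ha _ hb := M.sup_mem ha hb
  inf_mem _ ha _ hb := M.inf_mem ha hb
  compl_mem _ ha := M.compl_mem ha

lemma genBy_eq_closure (S : Set MAlgI) : genBy S = BooleanSubalgebra.closure S := by
  refine Subset.antisymm ?_ (subset_sInter fun T ⟨hT, hST⟩ ↦ ?_)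
  · exact sInter_subset_of_mem ⟨isSubalgebra_coe _, BooleanSubalgebra.subset_closure⟩
  · exact BooleanSubalgebra.closure_le (L := hT.toBooleanSubalgebra).2 hST

variable {φ : MAlgI → PFin ℕ}

/-- The bundled form of an embedding of a subalgebra of the measure algebra, forgetting
injectivity. -/
def IsEmbeddingOn.toBoundedLatticeHom (hφ : IsEmbeddingOn L φ) (hL : IsSubalgebra L) :
    BoundedLatticeHom hL.toBooleanSubalgebra (PFin ℕ) where
  toFun b := φ b
  map_sup' b c := hφ.map_sup b b.2 c c.2
  map_inf' b c := hφ.map_inf b b.2 c c.2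
  map_top' := hφ.map_top
  map_bot' := hφ.map_bot

lemma isEmbeddingOn_of_eq {M : BooleanSubalgebra MAlgI} {g : BoundedLatticeHom M (PFin ℕ)}
    (hg : Function.Injective g) (hφ : ∀ z : M, φ z = g z) : IsEmbeddingOn M φ where
  injOn y hy z hz h := by
    have h_eq : g ⟨y, hy⟩ = g ⟨z, hz⟩ := (hφ ⟨y, hy⟩).symm.trans (h.trans (hφ ⟨z, hz⟩))
    exact congrArg Subtype.val (hg h_eq)
  map_sup y hy z hz := by
    change φ (⟨y, hy⟩ ⊔ ⟨z, hz⟩ : M) = φ (⟨y, hy⟩ : M) ⊔ φ (⟨z, hz⟩ : M)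
    rw [hφ, hφ, hφ, map_sup]
  map_inf y hy z hz := by
    change φ (⟨y, hy⟩ ⊓ ⟨z, hz⟩ : M) = φ (⟨y, hy⟩ : M) ⊓ φ (⟨z, hz⟩ : M)
    rw [hφ, hφ, hφ, map_inf]
  map_compl y hy := by
    change φ ((⟨y, hy⟩ : M)ᶜ : M) = (φ (⟨y, hy⟩ : M))ᶜ
    rw [hφ, hφ, map_compl']
  map_bot := (hφ ⊥).trans (map_bot g)
  map_top := (hφ ⊤).trans (map_top g)

lemma exists_isEmbeddingOn_measurePreservingOn {M : BooleanSubalgebra MAlgI}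
    {g : BoundedLatticeHom M (PFin ℕ)} (hg : ∀ z : M, HasClassDensity (g z) (mval z).toReal) :
    ∃ ψ : MAlgI → PFin ℕ, (∀ z : M, ψ z = g z) ∧ IsEmbeddingOn M ψ ∧ MeasurePreservingOn M ψ := by
  have hψ := Subtype.val_injective.extend_apply g ⊥
  have hg_inj : Function.Injective g :=
    injective_of_hasClassDensity (fun _ hz ↦ Subtype.ext (toReal_mval_eq_zero_iff.1 hz)) hg
  exact ⟨Function.extend Subtype.val g ⊥, hψ, isEmbeddingOn_of_eq hg_inj hψ,
    fun z hz ↦ hψ ⟨z, hz⟩ ▸ hg ⟨z, hz⟩⟩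

end MeasureAlgebra

/-- every measure-preserving embedding of a countable subalgebra `𝕃` of `ℳ`
into `P(ℕ)/fin` extends over one more element to a measure-preserving embedding of the
subalgebra generated by `𝕃 ∪ {a}`. -/
theorem measure_preserving_extension_countable
    (L : Set MAlgI) (hL : IsSubalgebra L) (hcount : L.Countable)
    (a : MAlgI) (ha : a ∉ L)
    (φ : MAlgI → PFin ℕ) (hφ : IsEmbeddingOn L φ) (hmp : MeasurePreservingOn L φ) :
    ∃ ψ : MAlgI → PFin ℕ, (∀ b ∈ L, ψ b = φ b) ∧
      IsEmbeddingOn (genBy (insert a L)) ψ ∧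
      MeasurePreservingOn (genBy (insert a L)) ψ := by
  have : Countable hL.toBooleanSubalgebra := hcount.to_subtype
  obtain ⟨g, hg_ext, hg⟩ := measure_preserving_extension_countable_general
    (μ := fun z ↦ (mval z).toNNReal) (fun _ _ ↦ toNNReal_mval_sup) hL.toBooleanSubalgebra a
    (hφ.toBoundedLatticeHom hL) fun b ↦ hmp b b.2
  obtain ⟨ψ, hψ, hψ_emb⟩ := exists_isEmbeddingOn_measurePreservingOn hg
  refine ⟨ψ, fun b hb ↦ ?_, by rwa [genBy_eq_closure]⟩
  have hb' := BooleanSubalgebra.subset_closure (mem_insert_of_mem a hb)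
  exact (hψ ⟨b, hb'⟩).trans (hg_ext ⟨b, hb'⟩ ⟨b, hb⟩ rfl)

end Paper
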